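/- Let L_{s;l} be an admissible link configuration (obtainable from a Hopf link configuration by a sequence of admissible bigon extensions). Then L_{s;l} satisfies the EI-property, and the activity letter of every half-edge h_{(c_j,R)} of G^b_{L,s} is determined by: α(h_{(c_j,R)}) = L if c_j has the lowest label among all crossing points incident to the region R, and α(h_{(c_j,R)}) = D otherwise. -/

import Mathlib

/-!
Perfect matchings of a bigon extension `U'` of `U` are lifts of perfect matchings of `U`: one of
the two new crossings is matched with the bigon, and the other one takes over the partner of the
old crossing `c` (`TypeAExt.exists_lift`, `TypeAExt.exists_contract`).  Spanning trees behave in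
the same way: in a type A extension the edge `c` is subdivided, so a spanning tree of `U'` omits
at most one half, and omitting a half amounts to omitting `c` (`TypeAExt.isSpanningTree_iff`).

Hence fundamental cocycles of `U'` can be read off from those of `U`.
* The activity of an old crossing is unchanged (`active_old`).
* If the bigon is matched with `c1`, the half-edge of `c2` inherits the cocycle of `c`, with the
  parallel dual edge `c1` added when `c2` points to a white region (`active_both`, `active_one`).
* For the half-edge from `c1` to the bigon, the EI-property allows passing to a matching in which
  `c2` points to a white region; then the cocycle is `{c1, c2}`, which is also the set of crossings
  around the bigon (`active_newB`).

In each case the lowest-label rule for `U` gives the rule for `U'`.  The induction carries along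
the absence of loops, the fact that perfect matchings yield spanning trees, and the existence of
matchings with prescribed colour at a crossing (`LinkConfig.Inv`).  Type B extensions are reduced to
type A by exchanging the two colours (`LinkConfig.dual`).
-/

/-!
Combinatorial framework for link universes, checkerboard graphs, spanning-tree
activities and Kauffman-bracket evaluations, following
"Kauffman bracket polynomials, perfect matchings and cluster variables".
-/

attribute [local instance] Classical.propDecidable

/-- A multigraph: a type `E` of edges, each edge having an unordered pair of
endpoints in the vertex type `V`.  (Checkerboard graphs of link universes may
have parallel edges, so `SimpleGraph` does not suffice.) -/
structure Multigraph (V : Type) (E : Type) where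
  ends : E → Sym2 V

namespace Multigraph

variable {V E : Type} (G : Multigraph V E)

/-- `u` and `v` are joined by a walk using only edges from `T`. -/
def Connects (T : Set E) : V → V → Prop :=
  Relation.ReflTransGen fun a b => ∃ e ∈ T, G.ends e = s(a, b)

/-- `T` is (the edge set of) a spanning tree of `G`: the corresponding spanning
subgraph is connected and every edge of `T` is a bridge of it. -/
def IsSpanningTree (T : Set E) : Prop :=
  (∀ u v : V, G.Connects T u v) ∧
    ∀ e ∈ T, ∀ u v : V, G.ends e = s(u, v) → ¬ G.Connects (T \ {e}) u v

/-- The fundamental cocycle of an internal edge `e` relative to a spanning tree `T`: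
all edges `f` such that `(T \ {e}) ∪ {f}` is again a spanning tree. -/
def cocyc (T : Set E) (e : E) : Set E :=
  {f | G.IsSpanningTree (T \ {e} ∪ {f})}

/-- The fundamental cycle of an external edge `e` relative to a spanning tree `T`:
all edges `f` such that `(T ∪ {e}) \ {f}` is again a spanning tree (this is the
edge set of the unique cycle of `T ∪ {e}`). -/
def cyc (T : Set E) (e : E) : Set E :=
  {f | G.IsSpanningTree ((T ∪ {e}) \ {f})}

/-- An edge `e ∈ T` is internally active when it is the lowest-ordered edge of its
fundamental cocycle. -/
def InternallyActive (ord : E → ℕ) (T : Set E) (e : E) : Prop :=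
  e ∈ T ∧ ∀ f ∈ G.cocyc T e, ord e ≤ ord f

/-- An edge `e ∉ T` is externally active when it is the lowest-ordered edge of its
fundamental cycle. -/
def ExternallyActive (ord : E → ℕ) (T : Set E) (e : E) : Prop :=
  e ∉ T ∧ ∀ f ∈ G.cyc T e, ord e ≤ ord f

end Multigraph

/-- Tutte activity letters: `L`/`D` for internally active/inactive edges,
`ell`/`d` for externally active/inactive edges. -/
inductive ActLetter : Type
  | L | D | ell | d
  deriving DecidableEq

/-- The effect of a negative sign on an activity letter: the bracket evaluation of a
negatively signed letter equals that of the positively signed "negated" letter. -/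
def ActLetter.negate : ActLetter → ActLetter
  | .L => .ell
  | .ell => .L
  | .D => .d
  | .d => .D

/-- Bracket-polynomial evaluation of a positively signed activity letter:
`+L ↦ -A⁻³`, `+D ↦ A`, `+ℓ ↦ -A³`, `+d ↦ A⁻¹` (the variable `A` is the Laurent
generator `T`). -/
noncomputable def letterEvalPos : ActLetter → LaurentPolynomial ℤ
  | .L => -LaurentPolynomial.T (-3)
  | .D => LaurentPolynomial.T 1
  | .ell => -LaurentPolynomial.T 3
  | .d => LaurentPolynomial.T (-1)

/-- Bracket-polynomial evaluation of a signed activity letter (`true` = sign `+`). -/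
noncomputable def letterEval (sign : Bool) (a : ActLetter) : LaurentPolynomial ℤ :=
  if sign then letterEvalPos a else letterEvalPos a.negate

/-- The Tutte activity letter of an edge relative to a spanning tree. -/
noncomputable def Multigraph.actLetter {V E : Type} (G : Multigraph V E) (ord : E → ℕ)
    (T : Set E) (e : E) : ActLetter :=
  if e ∈ T then (if G.InternallyActive ord T e then .L else .D)
  else (if G.ExternallyActive ord T e then .ell else .d)

/-- A link configuration: the combinatorial data of a (connected, checkerboard
colored) link universe `L` together with a distinguished segment `s` and an
ordered labeling of its crossing points.

* `C` is the set of crossing points, `B`/`W` the sets of black/white regions and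
  `Seg` the set of segments of `L`.
* `G` is the checkerboard graph (one vertex per black region, one edge per
  crossing) and `Gd` the dual checkerboard graph.
* each segment is oriented (`segFrom`/`segTo`) so that its black side
  `segBlack` lies to the left; `rot` is the counterclockwise rotation of the
  segments around a crossing.
* `ord` is the ordered labeling of the crossings.
* `dual_trees` records planar duality between `G` and `Gd`: complements of
  spanning trees of `G` are exactly the (dual) spanning trees of `Gd`. -/
structure LinkConfig where
  C : Type
  B : Type
  W : Type
  Seg : Type
  [fintC : Fintype C]
  [decC : DecidableEq C]
  [fintB : Fintype B]
  [decB : DecidableEq B]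
  [fintW : Fintype W]
  [decW : DecidableEq W]
  [fintSeg : Fintype Seg]
  [decSeg : DecidableEq Seg]
  G : Multigraph B C
  Gd : Multigraph W C
  segFrom : Seg → C
  segTo : Seg → C
  segBlack : Seg → B
  segWhite : Seg → W
  rot : C → Seg → Seg
  s : Seg
  ord : C → ℕ
  ord_inj : Function.Injective ord
  dual_trees : ∀ T : Set C, G.IsSpanningTree T ↔ Gd.IsSpanningTree Tᶜ

attribute [instance] LinkConfig.fintC LinkConfig.decC LinkConfig.fintB LinkConfig.decB
  LinkConfig.fintW LinkConfig.decW LinkConfig.fintSeg LinkConfig.decSeg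

namespace LinkConfig

variable (U : LinkConfig)

/-- The black region adjacent to the distinguished segment (an omitted root vertex). -/
def rootB : U.B := U.segBlack U.s

/-- The white region adjacent to the distinguished segment (an omitted root vertex). -/
def rootW : U.W := U.segWhite U.s

/-- Incidence of a crossing with a region. -/
def Incid (c : U.C) : U.B ⊕ U.W → Prop
  | .inl b => b ∈ U.G.ends c
  | .inr w => w ∈ U.Gd.ends c

/-- A region distinct from the two regions adjacent to the distinguished segment. -/
def NonRoot : U.B ⊕ U.W → Prop
  | .inl b => b ≠ U.rootB
  | .inr w => w ≠ U.rootW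

/-- A perfect matching of the balanced overlaid checkerboard graph `G^b_{L,s}`,
recorded as the function sending each crossing to the region its matched
half-edge points to: every crossing is matched to an incident non-root region,
and every non-root region is matched exactly once. -/
def IsPM (m : U.C → U.B ⊕ U.W) : Prop :=
  (∀ c, U.Incid c (m c)) ∧ (∀ c, U.NonRoot (m c)) ∧
    ∀ R : U.B ⊕ U.W, U.NonRoot R → ∃! c, m c = R

/-- The map `η`: the double spanning tree associated to a perfect matching.  A
crossing whose half-edge is matched to a black region contributes its
checkerboard edge (an edge of the spanning-tree part in `G`); the others
contribute dual edges. -/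
def treeOf (m : U.C → U.B ⊕ U.W) : Set U.C :=
  {c | ∃ b, m c = Sum.inl b}

/-- `T` is (the `G`-part of) a double spanning tree `T ⊔ T̄` of the double
checkerboard graph. -/
def IsDoubleTree (T : Set U.C) : Prop :=
  U.G.IsSpanningTree T ∧ U.Gd.IsSpanningTree Tᶜ

/-- The activity letter of the (internal) edge of a double spanning tree at a given
crossing: `L` if it is lowest-ordered in its fundamental cocycle, `D` otherwise. -/
noncomputable def dblLetter (T : Set U.C) (c : U.C) : ActLetter :=
  if c ∈ T then (if U.G.InternallyActive U.ord T c then .L else .D)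
  else (if U.Gd.InternallyActive U.ord Tᶜ c then .L else .D)

/-- The activity letter `α_{η(P)}(η(h))` of the full-edge at crossing `c`
relative to the double spanning tree of the perfect matching `m`. -/
noncomputable def matchLetter (m : U.C → U.B ⊕ U.W) (c : U.C) : ActLetter :=
  U.dblLetter (U.treeOf m) c

/-- The half-edge `h_{(c,R)}` satisfies the evaluation identity (EI-) property:
all perfect matchings containing it assign the same activity letter to the
corresponding full-edge. -/
def EIhalf (c : U.C) (R : U.B ⊕ U.W) : Prop :=
  ∀ m m', U.IsPM m → U.IsPM m' → m c = R → m' c = R →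
    U.matchLetter m c = U.matchLetter m' c

/-- The link configuration satisfies the EI-property: every half-edge of the
balanced overlaid checkerboard graph does. -/
def EIconfig : Prop :=
  ∀ c R, U.Incid c R → U.NonRoot R → U.EIhalf c R

/-- `a` is the (well-defined) activity letter of the half-edge `h_{(c,R)}`:
some perfect matching contains the half-edge, and all perfect matchings
containing it assign it the letter `a`. -/
def LetterIs (c : U.C) (R : U.B ⊕ U.W) (a : ActLetter) : Prop :=
  (∃ m, U.IsPM m ∧ m c = R) ∧ ∀ m, U.IsPM m → m c = R → U.matchLetter m c = a

/-- The Hopf link universe: exactly two crossings, two black and two white regions,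
and both checkerboard graphs consist of two parallel (non-loop) edges. -/
def IsHopf : Prop :=
  Fintype.card U.C = 2 ∧ Fintype.card U.B = 2 ∧ Fintype.card U.W = 2 ∧
    (∀ c, ¬ (U.G.ends c).IsDiag) ∧ (∀ c, ¬ (U.Gd.ends c).IsDiag)

/-- Sign of a region: `+` (true) for black regions, `-` (false) for white ones. -/
def regionSign : U.B ⊕ U.W → Bool
  | .inl _ => true
  | .inr _ => false

/-- Sign of the half-edge `h_{(c,R)}`: the product `sign(c) ⋅ sign(R)`. -/
def halfSign (csign : U.C → Bool) (c : U.C) (R : U.B ⊕ U.W) : Bool :=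
  csign c == U.regionSign R

/-- The rule assigning activity letters in an admissible link configuration:
`L` if `c` carries the lowest label among all crossings incident to `R`,
`D` otherwise. -/
noncomputable def ruleLetter (c : U.C) (R : U.B ⊕ U.W) : ActLetter :=
  if ∀ c', U.Incid c' R → U.ord c ≤ U.ord c' then .L else .D

/-- The segment `t` is incident to the crossing `c`. -/
def SegAt (c : U.C) (t : U.Seg) : Prop :=
  U.segFrom t = c ∨ U.segTo t = c

/-- A transposable segment: one not bounding a region in common with the
distinguished segment. -/
def Transposable (t : U.Seg) : Prop :=
  U.segBlack t ≠ U.rootB ∧ U.segWhite t ≠ U.rootW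

/-- The up move at (the movable square face of) the segment `t`, equivalently the
counterclockwise transposition of Kauffman states at `t`: the two matched
half-edges of the square face are replaced by the two complementary ones. -/
def UpMove (t : U.Seg) (m m' : U.C → U.B ⊕ U.W) : Prop :=
  m (U.segFrom t) = Sum.inl (U.segBlack t) ∧ m (U.segTo t) = Sum.inr (U.segWhite t) ∧
    m' = Function.update (Function.update m (U.segFrom t) (Sum.inr (U.segWhite t)))
      (U.segTo t) (Sum.inl (U.segBlack t))

/-- One up move at some segment. -/
def UpStep (m m' : U.C → U.B ⊕ U.W) : Prop := ∃ t, U.UpMove t m m'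

/-- The partial order generated by up moves (counterclockwise transpositions). -/
def Reach : (U.C → U.B ⊕ U.W) → (U.C → U.B ⊕ U.W) → Prop :=
  Relation.ReflTransGen U.UpStep

/-- An active crossing point: among the half-edges at `v_c` there are exactly two,
forming a corner at `v_c` (i.e. the black and white regions on the two sides of a
segment ending at `c`), each carrying the activity letter `L`. -/
def ActiveCr (c : U.C) : Prop :=
  ∃ t, U.SegAt c t ∧
    U.LetterIs c (Sum.inl (U.segBlack t)) .L ∧
    U.LetterIs c (Sum.inr (U.segWhite t)) .L ∧
    ∀ R, U.Incid c R → U.LetterIs c R .L →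
      R = Sum.inl (U.segBlack t) ∨ R = Sum.inr (U.segWhite t)

/-- Combinatorial prime-likeness: there is no partition of the crossings into two
nonempty parts such that at most two segments join the two parts (such a
partition is exactly what a simple closed curve meeting `L` in two points, with
crossings on both sides, would produce). -/
def PrimeLike : Prop :=
  ¬ ∃ (X : Set U.C) (u v : U.Seg), (∃ c, c ∈ X) ∧ (∃ c, c ∉ X) ∧
      ∀ t : U.Seg, ¬ ((U.segFrom t ∈ X) ↔ (U.segTo t ∈ X)) → t = u ∨ t = v

end LinkConfig

/-- A sequence of counterclockwise transpositions (up moves), performed at the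
listed segments, from the first state to the last. -/
inductive LinkConfig.TransSeq (U : LinkConfig) :
    (U.C → U.B ⊕ U.W) → List U.Seg → (U.C → U.B ⊕ U.W) → Prop
  | nil (m : U.C → U.B ⊕ U.W) : LinkConfig.TransSeq U m [] m
  | cons {m m' m'' : U.C → U.B ⊕ U.W} {t : U.Seg} {l : List U.Seg} :
      U.UpMove t m m' → LinkConfig.TransSeq U m' l m'' → LinkConfig.TransSeq U m (t :: l) m''

/-- A bigon extension of type A at the crossing `c` of `U`, producing `U'`,
together with a natural relabeling of the crossings.  The crossing `c` is split
into the two new crossings `c1` (adjacent to the south black region `rS`) and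
`c2` (adjacent to the north black region `rN`), creating a new black bigon
region `newB` bounded by the two new segments `t1`, `t2`; in the checkerboard
graph the edge of `c` is subdivided by `newB`, and in the dual graph the edge
of `c` is doubled into two parallel edges. -/
structure TypeAExt (U U' : LinkConfig) (c : U.C) where
  /-- collapse map on crossings -/
  πC : U'.C → U.C
  c1 : U'.C
  c2 : U'.C
  c1_ne_c2 : c1 ≠ c2
  πc1 : πC c1 = c
  πc2 : πC c2 = c
  π_surj : Function.Surjective πC
  π_inj : ∀ x y, πC x = πC y → πC x ≠ c → x = y
  fiber_c : ∀ x, πC x = c → x = c1 ∨ x = c2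
  /-- inclusion of the old black regions -/
  ιB : U.B → U'.B
  ιB_inj : Function.Injective ιB
  /-- the new (black) bigon region -/
  newB : U'.B
  newB_not : ∀ b, ιB b ≠ newB
  B_cover : ∀ b', b' = newB ∨ ∃ b, ιB b = b'
  /-- correspondence of the white regions -/
  ιW : U.W → U'.W
  ιW_bij : Function.Bijective ιW
  /-- the two black regions at `c` (north and south of the new bigon) -/
  rN : U.B
  rS : U.B
  /-- the two white regions at `c` (west and east) -/
  rW : U.W
  rE : U.W
  ends_c : U.G.ends c = s(rN, rS)
  endsd_c : U.Gd.ends c = s(rW, rE)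
  ends_old : ∀ x, πC x ≠ c → U'.G.ends x = (U.G.ends (πC x)).map ιB
  endsd_old : ∀ x, πC x ≠ c → U'.Gd.ends x = (U.Gd.ends (πC x)).map ιW
  ends_c1 : U'.G.ends c1 = s(ιB rS, newB)
  ends_c2 : U'.G.ends c2 = s(ιB rN, newB)
  endsd_c1 : U'.Gd.ends c1 = s(ιW rW, ιW rE)
  endsd_c2 : U'.Gd.ends c2 = s(ιW rW, ιW rE)
  /-- inclusion of the old segments -/
  ιS : U.Seg → U'.Seg
  ιS_inj : Function.Injective ιS
  /-- the two new segments bounding the bigon -/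
  t1 : U'.Seg
  t2 : U'.Seg
  t1_ne_t2 : t1 ≠ t2
  t_new : ∀ t, ιS t ≠ t1 ∧ ιS t ≠ t2
  S_cover : ∀ u, u = t1 ∨ u = t2 ∨ ∃ t, ιS t = u
  seg_black1 : U'.segBlack t1 = newB
  seg_black2 : U'.segBlack t2 = newB
  seg_white1 : U'.segWhite t1 = ιW rW
  seg_white2 : U'.segWhite t2 = ιW rE
  seg_ends1 : (U'.segFrom t1 = c1 ∧ U'.segTo t1 = c2) ∨ (U'.segFrom t1 = c2 ∧ U'.segTo t1 = c1)
  seg_ends2 : (U'.segFrom t2 = c1 ∧ U'.segTo t2 = c2) ∨ (U'.segFrom t2 = c2 ∧ U'.segTo t2 = c1)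
  seg_from_old : ∀ t, πC (U'.segFrom (ιS t)) = U.segFrom t
  seg_to_old : ∀ t, πC (U'.segTo (ιS t)) = U.segTo t
  seg_black_old : ∀ t, U'.segBlack (ιS t) = ιB (U.segBlack t)
  seg_white_old : ∀ t, U'.segWhite (ιS t) = ιW (U.segWhite t)
  /-- the distinguished segment is preserved -/
  s_pres : U'.s = ιS U.s
  /-- natural relabeling: old crossings keep their relative order … -/
  ord_old : ∀ x y, πC x ≠ c → πC y ≠ c →
    (U'.ord x < U'.ord y ↔ U.ord (πC x) < U.ord (πC y))
  /-- … and the two new crossings sit exactly at the place of `c`. -/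
  ord_new1 : ∀ x, πC x ≠ c → (U'.ord x < U'.ord c1 ↔ U.ord (πC x) < U.ord c)
  ord_new2 : ∀ x, πC x ≠ c → (U'.ord x < U'.ord c2 ↔ U.ord (πC x) < U.ord c)

/-- A bigon extension of type B at the crossing `c` of `U`, producing `U'`:
the mirror of `TypeAExt`, creating a new white bigon region `newW`; now the
dual edge of `c` is subdivided and the checkerboard edge of `c` is doubled.
`c1` is the new crossing adjacent to the west white region `rW`. -/
structure TypeBExt (U U' : LinkConfig) (c : U.C) where
  πC : U'.C → U.C
  c1 : U'.C
  c2 : U'.C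
  c1_ne_c2 : c1 ≠ c2
  πc1 : πC c1 = c
  πc2 : πC c2 = c
  π_surj : Function.Surjective πC
  π_inj : ∀ x y, πC x = πC y → πC x ≠ c → x = y
  fiber_c : ∀ x, πC x = c → x = c1 ∨ x = c2
  ιW : U.W → U'.W
  ιW_inj : Function.Injective ιW
  newW : U'.W
  newW_not : ∀ w, ιW w ≠ newW
  W_cover : ∀ w', w' = newW ∨ ∃ w, ιW w = w'
  ιB : U.B → U'.B
  ιB_bij : Function.Bijective ιB
  rN : U.B
  rS : U.B
  rW : U.W
  rE : U.W
  ends_c : U.G.ends c = s(rN, rS)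
  endsd_c : U.Gd.ends c = s(rW, rE)
  ends_old : ∀ x, πC x ≠ c → U'.G.ends x = (U.G.ends (πC x)).map ιB
  endsd_old : ∀ x, πC x ≠ c → U'.Gd.ends x = (U.Gd.ends (πC x)).map ιW
  endsd_c1 : U'.Gd.ends c1 = s(ιW rW, newW)
  endsd_c2 : U'.Gd.ends c2 = s(ιW rE, newW)
  ends_c1 : U'.G.ends c1 = s(ιB rN, ιB rS)
  ends_c2 : U'.G.ends c2 = s(ιB rN, ιB rS)
  ιS : U.Seg → U'.Seg
  ιS_inj : Function.Injective ιS
  t1 : U'.Seg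
  t2 : U'.Seg
  t1_ne_t2 : t1 ≠ t2
  t_new : ∀ t, ιS t ≠ t1 ∧ ιS t ≠ t2
  S_cover : ∀ u, u = t1 ∨ u = t2 ∨ ∃ t, ιS t = u
  seg_white1 : U'.segWhite t1 = newW
  seg_white2 : U'.segWhite t2 = newW
  seg_black1 : U'.segBlack t1 = ιB rN
  seg_black2 : U'.segBlack t2 = ιB rS
  seg_ends1 : (U'.segFrom t1 = c1 ∧ U'.segTo t1 = c2) ∨ (U'.segFrom t1 = c2 ∧ U'.segTo t1 = c1)
  seg_ends2 : (U'.segFrom t2 = c1 ∧ U'.segTo t2 = c2) ∨ (U'.segFrom t2 = c2 ∧ U'.segTo t2 = c1)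
  seg_from_old : ∀ t, πC (U'.segFrom (ιS t)) = U.segFrom t
  seg_to_old : ∀ t, πC (U'.segTo (ιS t)) = U.segTo t
  seg_black_old : ∀ t, U'.segBlack (ιS t) = ιB (U.segBlack t)
  seg_white_old : ∀ t, U'.segWhite (ιS t) = ιW (U.segWhite t)
  s_pres : U'.s = ιS U.s
  ord_old : ∀ x y, πC x ≠ c → πC y ≠ c →
    (U'.ord x < U'.ord y ↔ U.ord (πC x) < U.ord (πC y))
  ord_new1 : ∀ x, πC x ≠ c → (U'.ord x < U'.ord c1 ↔ U.ord (πC x) < U.ord c)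
  ord_new2 : ∀ x, πC x ≠ c → (U'.ord x < U'.ord c2 ↔ U.ord (πC x) < U.ord c)

/-- A bigon extension of either type. -/
def BigonExt (U U' : LinkConfig) (c : U.C) : Type :=
  TypeAExt U U' c ⊕ TypeBExt U U' c

namespace BigonExt

variable {U U' : LinkConfig} {c : U.C}

def πC : BigonExt U U' c → U'.C → U.C
  | .inl e => e.πC
  | .inr e => e.πC

def c1 : BigonExt U U' c → U'.C
  | .inl e => e.c1
  | .inr e => e.c1

def c2 : BigonExt U U' c → U'.C
  | .inl e => e.c2
  | .inr e => e.c2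

end BigonExt

/-- Admissible link configurations: those obtained from a Hopf link configuration
by a sequence of admissible bigon extensions (i.e. bigon extensions for which a
natural relabeling of the result satisfies the EI-property). -/
inductive IsAdmissible : LinkConfig → Prop
  | hopf (U : LinkConfig) : U.IsHopf → IsAdmissible U
  | stepA (U U' : LinkConfig) (c : U.C) :
      IsAdmissible U → TypeAExt U U' c → U'.EIconfig → IsAdmissible U'
  | stepB (U U' : LinkConfig) (c : U.C) :
      IsAdmissible U → TypeBExt U U' c → U'.EIconfig → IsAdmissible U'

namespace Multigraph

variable {V E : Type} {G : Multigraph V E}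

theorem Connects.symm {T : Set E} {u v : V} (h : G.Connects T u v) : G.Connects T v u := by
  have hs : Std.Symm (fun a b => ∃ e ∈ T, G.ends e = s(a, b)) :=
    ⟨fun a b ⟨e, he, h⟩ => ⟨e, he, by rw [h, Sym2.eq_swap]⟩⟩
  exact Relation.ReflTransGen.stdSymm.symm _ _ h

theorem Connects.trans {T : Set E} {u v w : V} (h : G.Connects T u v)
    (h' : G.Connects T v w) : G.Connects T u w :=
  Relation.ReflTransGen.trans h h'

theorem connects_edge {T : Set E} {e : E} {u v : V} (he : e ∈ T) (h : G.ends e = s(u, v)) :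
    G.Connects T u v :=
  Relation.ReflTransGen.single ⟨e, he, h⟩

theorem Connects.mono {S T : Set E} (hST : S ⊆ T) {u v : V} (h : G.Connects S u v) :
    G.Connects T u v :=
  Relation.ReflTransGen.mono (fun _ _ ⟨e, he, h⟩ => ⟨e, hST he, h⟩) _ _ h

/-- Spanning trees form an antichain. -/
theorem IsSpanningTree.eq_of_subset {S T : Set E} (hS : G.IsSpanningTree S)
    (hT : G.IsSpanningTree T) (hST : S ⊆ T) : S = T := by
  refine Set.Subset.antisymm hST fun e he => ?_
  by_contra hne
  obtain ⟨⟨u, v⟩, huv⟩ := Quot.exists_rep (G.ends e)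
  have hsub : S ⊆ T \ {e} := fun f hf => ⟨hST hf, fun h => hne (h ▸ hf)⟩
  exact hT.2 e he u v huv.symm ((hS.1 u v).mono hsub)

end Multigraph

namespace LinkConfig

/-- Activity of the crossing `x` relative to the double tree `T ⊔ Tᶜ`, expressed through
exchanges inside spanning trees of `G` only: planar duality turns an exchange in the dual
tree into one in `T`. -/
def Active (U : LinkConfig) (T : Set U.C) (x : U.C) : Prop :=
  (x ∈ T → ∀ f, f ∉ T → U.G.IsSpanningTree (T \ {x} ∪ {f}) → U.ord x ≤ U.ord f) ∧
  (x ∉ T → ∀ f, f ∈ T → U.G.IsSpanningTree ((T ∪ {x}) \ {f}) → U.ord x ≤ U.ord f)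

theorem dblLetter_eq (U : LinkConfig) {T : Set U.C} (hT : U.G.IsSpanningTree T) (x : U.C) :
    U.dblLetter T x = if U.Active T x then .L else .D := by
  unfold dblLetter
  by_cases hx : x ∈ T
  · rw [if_pos hx]
    congr 1
    simp only [Multigraph.InternallyActive, Active, hx, true_and, not_true, forall_const,
      false_imp_iff, and_true, Multigraph.cocyc, Set.mem_ofPred_eq, eq_iff_iff]
    refine ⟨fun h f _ hf => h f hf, fun h f hf => ?_⟩
    by_cases hfx : f = x
    · rw [hfx]
    by_cases hfT : f ∈ T
    · have := hf.eq_of_subset hT (by rintro y (hy | rfl); exacts [hy.1, hfT])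
      rw [← this] at hx
      rcases hx with hx | hx
      · exact absurd rfl hx.2
      · exact absurd hx.symm hfx
    · exact h f hfT hf
  · rw [if_neg hx]
    congr 1
    have hset : ∀ f, (Tᶜ \ {x} ∪ {f} : Set U.C) = ((T ∪ {x}) \ {f})ᶜ := by
      intro f; ext y; simp; tauto
    simp only [Multigraph.InternallyActive, Active, hx, Set.mem_compl_iff, not_false_eq_true,
      true_and, forall_const, false_imp_iff, Multigraph.cocyc, Set.mem_ofPred_eq, hset,
      ← U.dual_trees, eq_iff_iff]
    refine ⟨fun h f _ hf => h f hf, fun h f hf => ?_⟩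
    by_cases hfx : f = x
    · rw [hfx]
    by_cases hfT : f ∈ T
    · exact h f hfT hf
    · have := hT.eq_of_subset hf (fun y hy => ⟨Or.inl hy, by rintro rfl; exact hfT hy⟩)
      rw [this] at hx
      exact absurd ⟨Or.inr rfl, fun h => hfx h.symm⟩ hx

/-- The statement carried through the induction: there are no loops, perfect matchings give
spanning trees, every crossing can be matched to a black region and to a white region, and
activity letters follow the lowest-label rule. -/
structure Inv (U : LinkConfig) : Prop where
  noLoop : ∀ c, ¬ (U.G.ends c).IsDiag
  noLoopd : ∀ c, ¬ (U.Gd.ends c).IsDiag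
  tree : ∀ m, U.IsPM m → U.G.IsSpanningTree (U.treeOf m)
  black : ∀ c, ∃ m, U.IsPM m ∧ ∃ b, m c = Sum.inl b
  white : ∀ c, ∃ m, U.IsPM m ∧ ∃ w, m c = Sum.inr w
  rule : ∀ m, U.IsPM m → ∀ c, U.matchLetter m c = U.ruleLetter c (m c)

/-! ### The Hopf link -/

theorem isSpanningTree_singleton {V E : Type} [Fintype V] (G : Multigraph V E)
    (hV : ∀ u v w : V, u ≠ v → w = u ∨ w = v) (hG : ∀ e, ¬ (G.ends e).IsDiag) (e : E) :
    G.IsSpanningTree {e} := by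
  obtain ⟨⟨a, b⟩, hab⟩ := Quot.exists_rep (G.ends e)
  have hab : G.ends e = s(a, b) := hab.symm
  have hne : a ≠ b := by
    have := hG e
    rwa [hab, Sym2.mk_isDiag_iff] at this
  have h1 : G.Connects {e} a b := Multigraph.connects_edge rfl hab
  refine ⟨fun u v => ?_, ?_⟩
  · rcases hV a b u hne with rfl | rfl <;> rcases hV _ _ v hne with rfl | rfl
    · exact Relation.ReflTransGen.refl
    · exact h1
    · exact h1.symm
    · exact Relation.ReflTransGen.refl
  · rintro f rfl u v huv hc
    have huv' : u ≠ v := by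
      have := hG f
      rwa [huv, Sym2.mk_isDiag_iff] at this
    rcases Relation.ReflTransGen.cases_head hc with h | ⟨d, ⟨g, hg, _⟩, _⟩
    · exact huv' h
    · simp at hg

theorem IsHopf.inv {U : LinkConfig} (h : U.IsHopf) : U.Inv := by
  obtain ⟨hC, hB, hW, hG, hGd⟩ := h
  have two : ∀ {V : Type} [Fintype V], Fintype.card V = 2 →
      ∀ u v w : V, u ≠ v → w = u ∨ w = v := by
    intro V _ hV u v w huv
    by_contra! hw
    have : Fintype.card V > 2 :=
      Fintype.two_lt_card_iff.2 ⟨u, v, w, huv, hw.1.symm, hw.2.symm⟩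
    omega
  have memAll : ∀ {V : Type} [Fintype V], Fintype.card V = 2 →
      ∀ (z : Sym2 V), ¬ z.IsDiag → ∀ v, v ∈ z := by
    intro V _ hV z
    induction z with
    | _ a b =>
      intro hz v
      rw [Sym2.mk_isDiag_iff] at hz
      rw [Sym2.mem_iff]
      exact two hV a b v hz
  have hinc : ∀ c R, U.Incid c R := by
    rintro c (b | w)
    · exact memAll hB _ (hG c) b
    · exact memAll hW _ (hGd c) w
  obtain ⟨b1, hb1⟩ : ∃ b, b ≠ U.rootB :=
    Fintype.exists_ne_of_one_lt_card (by omega : 1 < Fintype.card U.B) _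
  obtain ⟨w1, hw1⟩ : ∃ w, w ≠ U.rootW :=
    Fintype.exists_ne_of_one_lt_card (by omega : 1 < Fintype.card U.W) _
  have hbu : ∀ b, b ≠ U.rootB → b = b1 := fun b hb =>
    (two hB U.rootB b1 b hb1.symm).resolve_left hb
  have hwu : ∀ w, w ≠ U.rootW → w = w1 := fun w hw =>
    (two hW U.rootW w1 w hw1.symm).resolve_left hw
  have hST := isSpanningTree_singleton U.G (two hB) hG
  have htree : ∀ m, U.IsPM m → ∃ a, U.treeOf m = {a} := by
    rintro m ⟨_, hn, hu⟩
    obtain ⟨a, ha, hau⟩ := hu (Sum.inl b1) hb1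
    refine ⟨a, Set.ext fun y => ⟨?_, ?_⟩⟩
    · rintro ⟨b, hb⟩
      have := hn y
      rw [hb] at this
      rw [hbu b this] at hb
      exact hau y hb
    · rintro rfl
      exact ⟨b1, ha⟩
  have hpm : ∀ a a' : U.C, a ≠ a' →
      ∃ m, U.IsPM m ∧ m a = Sum.inl b1 ∧ m a' = Sum.inr w1 := by
    intro a a' ha
    refine ⟨fun y => if y = a then Sum.inl b1 else Sum.inr w1, ⟨fun _ => hinc _ _, ?_, ?_⟩, ?_, ?_⟩
    · intro y
      by_cases hy : y = a
      · simp only [if_pos hy]; exact hb1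
      · simp only [if_neg hy]; exact hw1
    · rintro (b | w) hR
      · rw [hbu b hR]
        refine ⟨a, by simp, fun y hy => ?_⟩
        by_contra hya
        simp [hya] at hy
      · rw [hwu w hR]
        refine ⟨a', by simp [ha.symm], fun y hy => ?_⟩
        rcases two hC a a' y ha with rfl | rfl
        · simp at hy
        · rfl
    · simp
    · simp [ha.symm]
  have hex : ∀ a : U.C, ∃ a', a' ≠ a := fun a =>
    Fintype.exists_ne_of_one_lt_card (by omega : 1 < Fintype.card U.C) a
  refine ⟨hG, hGd, ?_, ?_, ?_, ?_⟩
  · intro m hm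
    obtain ⟨a, ha⟩ := htree m hm
    rw [ha]; exact hST a
  · intro a
    obtain ⟨a', h⟩ := hex a
    obtain ⟨m, hm, h1, _⟩ := hpm a a' h.symm
    exact ⟨m, hm, _, h1⟩
  · intro a
    obtain ⟨a', h⟩ := hex a
    obtain ⟨m, hm, _, h1⟩ := hpm a' a h
    exact ⟨m, hm, _, h1⟩
  · intro m hm x
    obtain ⟨a, ha⟩ := htree m hm
    unfold matchLetter ruleLetter
    rw [ha, dblLetter_eq U (hST a)]
    congr 1
    simp only [hinc, true_imp_iff, Active, Set.mem_singleton_iff, eq_iff_iff]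
    by_cases hx : x = a
    · subst hx
      refine ⟨fun h y => ?_, fun h => ⟨fun _ f _ _ => h f, fun hn => absurd rfl hn⟩⟩
      by_cases hy : y = x
      · rw [hy]
      · exact h.1 rfl y hy (by simpa using hST y)
    · refine ⟨fun h y => ?_, fun h => ⟨fun hn => absurd hn hx, fun _ f _ _ => h f⟩⟩
      rcases two hC x a y hx with rfl | rfl
      · exact le_rfl
      · refine h.2 hx y rfl ?_
        have : ({y} ∪ {x} : Set U.C) \ {y} = {x} := by
          ext z; simp only [Set.mem_sdiff, Set.mem_union, Set.mem_singleton_iff]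
          constructor
          · tauto
          · rintro rfl; exact ⟨Or.inr rfl, hx⟩
        rw [this]; exact hST x

/-! ### Exchanging the two colours -/

/-- The configuration with the black and white regions exchanged. -/
@[reducible] def dual (U : LinkConfig) : LinkConfig where
  C := U.C
  B := U.W
  W := U.B
  Seg := U.Seg
  G := U.Gd
  Gd := U.G
  segFrom := U.segFrom
  segTo := U.segTo
  segBlack := U.segWhite
  segWhite := U.segBlack
  rot := U.rot
  s := U.s
  ord := U.ord
  ord_inj := U.ord_inj
  dual_trees := fun T => by rw [U.dual_trees, compl_compl]

variable (U : LinkConfig)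

theorem incid_dual (c : U.C) (R : U.B ⊕ U.W) : U.dual.Incid c R.swap ↔ U.Incid c R := by
  cases R <;> rfl

theorem nonRoot_dual (R : U.B ⊕ U.W) : U.dual.NonRoot R.swap ↔ U.NonRoot R := by
  cases R <;> rfl

theorem isPM_dual_of {m : U.C → U.B ⊕ U.W} (h : U.IsPM m) :
    U.dual.IsPM (fun c => (m c).swap) := by
  refine ⟨fun c => (U.incid_dual _ _).2 (h.1 c), fun c => (U.nonRoot_dual _).2 (h.2.1 c),
    fun R hR => ?_⟩
  obtain ⟨R, rfl⟩ : ∃ R₀ : U.B ⊕ U.W, R₀.swap = R := ⟨Sum.swap R, Sum.swap_swap R⟩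
  obtain ⟨c, hc, hu⟩ := h.2.2 R ((U.nonRoot_dual _).1 hR)
  refine ⟨c, congrArg Sum.swap hc, fun y hy => hu y ?_⟩
  simpa using congrArg Sum.swap hy

/-- Every perfect matching of the dual configuration is the colour swap of one of `U`. -/
theorem exists_of_isPM_dual {m : U.dual.C → U.dual.B ⊕ U.dual.W} (h : U.dual.IsPM m) :
    ∃ m₀ : U.C → U.B ⊕ U.W, U.IsPM m₀ ∧ m = fun c => (m₀ c).swap :=
  ⟨fun c => (m c).swap, U.dual.isPM_dual_of h, funext fun c => (Sum.swap_swap (m c)).symm⟩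

theorem treeOf_dual (m : U.C → U.B ⊕ U.W) :
    U.dual.treeOf (fun c => (m c).swap) = (U.treeOf m)ᶜ := by
  ext c
  change (∃ b, (m c).swap = Sum.inl b) ↔ ¬ ∃ b, m c = Sum.inl b
  cases m c <;> simp

theorem matchLetter_dual (m : U.C → U.B ⊕ U.W) (c : U.C) :
    U.dual.matchLetter (fun c => (m c).swap) c = U.matchLetter m c := by
  unfold matchLetter
  rw [treeOf_dual]
  unfold dblLetter
  by_cases h : c ∈ U.treeOf m
  · rw [if_neg (fun h' => h' h), if_pos h, compl_compl]
  · rw [if_pos (show c ∈ (U.treeOf m)ᶜ from h), if_neg h]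

theorem ruleLetter_dual (c : U.C) (R : U.B ⊕ U.W) :
    U.dual.ruleLetter c R.swap = U.ruleLetter c R := by
  unfold ruleLetter
  congr 1
  exact propext (forall_congr' fun y => imp_congr (U.incid_dual y R) Iff.rfl)

variable {U}

theorem Inv.dual (h : U.Inv) : U.dual.Inv := by
  refine ⟨h.noLoopd, h.noLoop, ?_, ?_, ?_, ?_⟩
  · intro m hm
    obtain ⟨m, hm₀, rfl⟩ := U.exists_of_isPM_dual hm
    rw [treeOf_dual]
    exact (U.dual_trees _).1 (h.tree m hm₀)
  · intro c
    obtain ⟨m, hm, w, hw⟩ := h.white c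
    exact ⟨_, U.isPM_dual_of hm, w, congrArg Sum.swap hw⟩
  · intro c
    obtain ⟨m, hm, w, hw⟩ := h.black c
    exact ⟨_, U.isPM_dual_of hm, w, congrArg Sum.swap hw⟩
  · intro m hm c
    obtain ⟨m, hm₀, rfl⟩ := U.exists_of_isPM_dual hm
    exact (U.matchLetter_dual m c).trans ((h.rule m hm₀ c).trans (U.ruleLetter_dual c _).symm)

theorem EIconfig.dual (h : U.EIconfig) : U.dual.EIconfig := by
  intro c R hi hn m m' hm hm' hc hc'
  obtain ⟨m, hm₀, rfl⟩ := U.exists_of_isPM_dual hm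
  obtain ⟨m', hm₀', rfl⟩ := U.exists_of_isPM_dual hm'
  refine (U.matchLetter_dual m c).trans (Eq.trans ?_ (U.matchLetter_dual m' c).symm)
  have e : m' c = m c := Sum.swap_leftInverse.injective (hc'.trans hc.symm)
  exact h c (m c) (hm₀.1 c) (hm₀.2.1 c) m m' hm₀ hm₀' rfl e

end LinkConfig

/-- A type B extension is a type A extension of the colour-swapped configurations. -/
def TypeBExt.toDual {U U' : LinkConfig} {c : U.C} (e : TypeBExt U U' c) :
    TypeAExt U.dual U'.dual c where
  πC := e.πC
  c1 := e.c1
  c2 := e.c2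
  c1_ne_c2 := e.c1_ne_c2
  πc1 := e.πc1
  πc2 := e.πc2
  π_surj := e.π_surj
  π_inj := e.π_inj
  fiber_c := e.fiber_c
  ιB := e.ιW
  ιB_inj := e.ιW_inj
  newB := e.newW
  newB_not := e.newW_not
  B_cover := e.W_cover
  ιW := e.ιB
  ιW_bij := e.ιB_bij
  rN := e.rE
  rS := e.rW
  rW := e.rN
  rE := e.rS
  ends_c := e.endsd_c.trans Sym2.eq_swap
  endsd_c := e.ends_c
  ends_old := e.endsd_old
  endsd_old := e.ends_old
  ends_c1 := e.endsd_c1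
  ends_c2 := e.endsd_c2
  endsd_c1 := e.ends_c1
  endsd_c2 := e.ends_c2
  ιS := e.ιS
  ιS_inj := e.ιS_inj
  t1 := e.t1
  t2 := e.t2
  t1_ne_t2 := e.t1_ne_t2
  t_new := e.t_new
  S_cover := e.S_cover
  seg_black1 := e.seg_white1
  seg_black2 := e.seg_white2
  seg_white1 := e.seg_black1
  seg_white2 := e.seg_black2
  seg_ends1 := e.seg_ends1
  seg_ends2 := e.seg_ends2
  seg_from_old := e.seg_from_old
  seg_to_old := e.seg_to_old
  seg_black_old := e.seg_white_old
  seg_white_old := e.seg_black_old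
  s_pres := e.s_pres
  ord_old := e.ord_old
  ord_new1 := e.ord_new1
  ord_new2 := e.ord_new2

namespace TypeAExt

variable {U U' : LinkConfig} {c : U.C}

/-- The same extension with the roles of the two new crossings exchanged. -/
def flip (e : TypeAExt U U' c) : TypeAExt U U' c :=
  { e with
    c1 := e.c2
    c2 := e.c1
    c1_ne_c2 := e.c1_ne_c2.symm
    πc1 := e.πc2
    πc2 := e.πc1
    fiber_c := fun x hx => (e.fiber_c x hx).symm
    rN := e.rS
    rS := e.rN
    ends_c := e.ends_c.trans Sym2.eq_swap
    ends_c1 := e.ends_c2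
    ends_c2 := e.ends_c1
    endsd_c1 := e.endsd_c2
    endsd_c2 := e.endsd_c1
    seg_ends1 := e.seg_ends1.symm
    seg_ends2 := e.seg_ends2.symm
    ord_new1 := e.ord_new2
    ord_new2 := e.ord_new1 }

variable (e : TypeAExt U U' c)

theorem ne_c1_of_old {x : U'.C} (hx : e.πC x ≠ c) : x ≠ e.c1 := by
  rintro rfl; exact hx e.πc1

theorem ne_c2_of_old {x : U'.C} (hx : e.πC x ≠ c) : x ≠ e.c2 := by
  rintro rfl; exact hx e.πc2

theorem cases_crossing (x : U'.C) : x = e.c1 ∨ x = e.c2 ∨ e.πC x ≠ c := by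
  by_cases h : e.πC x = c
  · rcases e.fiber_c x h with h | h <;> simp [h]
  · exact Or.inr (Or.inr h)

theorem π_eq_iff {x z : U'.C} (hx : e.πC x ≠ c) : e.πC z = e.πC x ↔ z = x :=
  ⟨fun h => (e.π_inj x z h.symm hx).symm, fun h => h ▸ rfl⟩

/-- A natural relabeling preserves the order of crossings with distinct images. -/
theorem ord_le_iff {x y : U'.C} (h : e.πC x ≠ e.πC y) :
    U'.ord x ≤ U'.ord y ↔ U.ord (e.πC x) ≤ U.ord (e.πC y) := by
  have hxy : x ≠ y := fun h' => h (h' ▸ rfl)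
  have h1 : U'.ord x ≠ U'.ord y := fun h' => hxy (U'.ord_inj h')
  have h2 : U.ord (e.πC x) ≠ U.ord (e.πC y) := fun h' => h (U.ord_inj h')
  rcases e.cases_crossing x with rfl | rfl | hx
  · rw [e.πc1] at h h2 ⊢
    have := e.ord_new1 y h.symm
    omega
  · rw [e.πc2] at h h2 ⊢
    have := e.ord_new2 y h.symm
    omega
  · rcases e.cases_crossing y with rfl | rfl | hy
    · rw [e.πc1] at h h2 ⊢
      have := e.ord_new1 x hx
      omega
    · rw [e.πc2] at h h2 ⊢
      have := e.ord_new2 x hx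
      omega
    · have := e.ord_old x y hx hy
      omega

/-! ### Spanning trees of a type A extension -/

/-- The edge set of `U` induced by an edge set of `U'`: the edge `c` is kept exactly when both
halves `c1`, `c2` of its subdivision are present. -/
def push (T' : Set U'.C) : Set U.C := {y | ∀ x, e.πC x = y → x ∈ T'}

theorem mem_push_old {T' : Set U'.C} {x : U'.C} (hx : e.πC x ≠ c) :
    e.πC x ∈ e.push T' ↔ x ∈ T' := by
  refine ⟨fun h => h x rfl, fun h y hy => ?_⟩
  rwa [(e.π_eq_iff hx).1 hy]

theorem mem_push_c {T' : Set U'.C} : c ∈ e.push T' ↔ e.c1 ∈ T' ∧ e.c2 ∈ T' := by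
  refine ⟨fun h => ⟨h _ e.πc1, h _ e.πc2⟩, fun h y hy => ?_⟩
  rcases e.fiber_c y hy with rfl | rfl
  exacts [h.1, h.2]

theorem eq_push {T' : Set U'.C} {T : Set U.C} (hc : (e.c1 ∈ T' ∧ e.c2 ∈ T') ↔ c ∈ T)
    (hold : ∀ x, e.πC x ≠ c → (x ∈ T' ↔ e.πC x ∈ T)) : e.push T' = T := by
  ext y
  by_cases hy : y = c
  · rw [hy, mem_push_c, hc]
  · obtain ⟨x, rfl⟩ := e.π_surj y
    rw [e.mem_push_old hy, hold x hy]

theorem connects_lift {T' : Set U'.C} {u v : U.B} (h : U.G.Connects (e.push T') u v) :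
    U'.G.Connects T' (e.ιB u) (e.ιB v) := by
  refine Relation.ReflTransGen.lift' e.ιB ?_ _ _ h
  rintro a b ⟨y, hy, hab⟩
  by_cases hyc : y = c
  · subst hyc
    rw [mem_push_c] at hy
    have h1 : U'.G.Connects T' (e.ιB e.rS) e.newB := Multigraph.connects_edge hy.1 e.ends_c1
    have h2 : U'.G.Connects T' (e.ιB e.rN) e.newB := Multigraph.connects_edge hy.2 e.ends_c2
    rw [e.ends_c, Sym2.eq_iff] at hab
    rcases hab with ⟨rfl, rfl⟩ | ⟨rfl, rfl⟩
    · exact h2.trans h1.symm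
    · exact h1.trans h2.symm
  · obtain ⟨x, rfl⟩ := e.π_surj y
    refine Multigraph.connects_edge ((e.mem_push_old hyc).1 hy) ?_
    rw [e.ends_old x hyc, hab, Sym2.map_mk]

theorem connects_iff {T' : Set U'.C} {u v : U.B} :
    U'.G.Connects T' (e.ιB u) (e.ιB v) ↔ U.G.Connects (e.push T') u v := by
  refine ⟨fun h => ?_, e.connects_lift⟩
  -- Retract the bigon onto an endpoint of `c` to which it is joined inside `T'`.
  let r : U.B := if e.c1 ∈ T' then e.rS else e.rN
  let ρ : U'.B → U.B := fun b' => if h : ∃ b, e.ιB b = b' then h.choose else r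
  have hρ : ∀ b, ρ (e.ιB b) = b := fun b => by
    have h : ∃ b₀, e.ιB b₀ = e.ιB b := ⟨b, rfl⟩
    change (if h : ∃ b₀, e.ιB b₀ = e.ιB b then h.choose else r) = b
    rw [dif_pos h]
    exact e.ιB_inj h.choose_spec
  have hρn : ρ e.newB = r := dif_neg fun ⟨b, hb⟩ => e.newB_not b hb
  have key : ∀ x ∈ T', ∀ a b, U'.G.ends x = s(a, b) →
      U.G.Connects (e.push T') (ρ a) (ρ b) := by
    intro x hx a b hab
    rcases e.cases_crossing x with rfl | rfl | hxo
    · have : ρ a = ρ b := by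
        rw [e.ends_c1, Sym2.eq_iff] at hab
        have hr : r = e.rS := if_pos hx
        rcases hab with ⟨rfl, rfl⟩ | ⟨rfl, rfl⟩ <;> rw [hρ, hρn, hr]
      rw [this]; exact Relation.ReflTransGen.refl
    · have hr : U.G.Connects (e.push T') e.rN r := by
        by_cases h1 : e.c1 ∈ T'
        · rw [show r = e.rS from if_pos h1]
          exact Multigraph.connects_edge (e.mem_push_c.2 ⟨h1, hx⟩) e.ends_c
        · rw [show r = e.rN from if_neg h1]
          exact Relation.ReflTransGen.refl
      rw [e.ends_c2, Sym2.eq_iff] at hab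
      rcases hab with ⟨rfl, rfl⟩ | ⟨rfl, rfl⟩
      · rwa [hρ, hρn]
      · rw [hρ, hρn]; exact hr.symm
    · refine Multigraph.connects_edge ((e.mem_push_old hxo).2 hx) ?_
      rw [e.ends_old x hxo] at hab
      have := congrArg (Sym2.map ρ) hab
      rwa [Sym2.map_map, Sym2.map_mk, show ρ ∘ e.ιB = id from funext hρ, Sym2.map_id, id] at this
  have : U.G.Connects (e.push T') (ρ (e.ιB u)) (ρ (e.ιB v)) :=
    Relation.ReflTransGen.lift' ρ (fun a b ⟨x, hx, hab⟩ => key x hx a b hab) _ _ h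
  rwa [hρ, hρ] at this

theorem newB_isolated {T' : Set U'.C} (h1 : e.c1 ∉ T') (h2 : e.c2 ∉ T') (b : U.B) :
    ¬ U'.G.Connects T' e.newB (e.ιB b) := by
  intro h
  rcases Relation.ReflTransGen.cases_head h with h | ⟨d, ⟨x, hx, hd⟩, _⟩
  · exact e.newB_not b h.symm
  · rcases e.cases_crossing x with rfl | rfl | hxo
    · exact h1 hx
    · exact h2 hx
    · have : e.newB ∈ U'.G.ends x := by rw [hd]; exact Sym2.mem_mk_left _ _
      rw [e.ends_old x hxo, Sym2.mem_map] at this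
      obtain ⟨b, _, hb⟩ := this
      exact e.newB_not b hb

theorem newB_connects {T' : Set U'.C} (h : e.c1 ∈ T' ∨ e.c2 ∈ T') :
    ∃ b, U'.G.Connects T' e.newB (e.ιB b) := by
  rcases h with h | h
  · exact ⟨_, (Multigraph.connects_edge h e.ends_c1).symm⟩
  · exact ⟨_, (Multigraph.connects_edge h e.ends_c2).symm⟩

theorem push_diff_old (T' : Set U'.C) {x : U'.C} (hx : e.πC x ≠ c) :
    e.push (T' \ {x}) = e.push T' \ {e.πC x} := by
  refine e.eq_push ?_ fun y hy => ?_
  · simp only [Set.mem_sdiff, Set.mem_singleton_iff, mem_push_c, (e.ne_c1_of_old hx).symm,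
      (e.ne_c2_of_old hx).symm, hx.symm, not_false_eq_true, and_true]
  · simp only [Set.mem_sdiff, Set.mem_singleton_iff, e.mem_push_old hy, e.π_eq_iff hx]

theorem push_diff_c1 (T' : Set U'.C) : e.push (T' \ {e.c1}) = e.push T' \ {c} := by
  refine e.eq_push ?_ fun y hy => ?_
  · simp
  · simp [e.mem_push_old hy, hy, e.ne_c1_of_old hy]

/-- If `c2` is present, deleting `c1` leaves its ends connected exactly when deleting `c`
does so in the original graph. -/
theorem c1_bridge_iff {T' : Set U'.C} (h2 : e.c2 ∈ T') :
    U'.G.Connects (T' \ {e.c1}) (e.ιB e.rS) e.newB ↔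
      U.G.Connects (e.push T' \ {c}) e.rN e.rS := by
  have h : U'.G.Connects (T' \ {e.c1}) (e.ιB e.rN) e.newB :=
    Multigraph.connects_edge ⟨h2, fun h => e.c1_ne_c2 h.symm⟩ e.ends_c2
  rw [← push_diff_c1, ← e.connects_iff]
  exact ⟨fun h' => h.trans h'.symm, fun h' => h'.symm.trans h⟩

theorem bridge_iff_ends {V E : Type} {G : Multigraph V E} {T : Set E} {x : E} {a b : V}
    (hab : G.ends x = s(a, b)) :
    (∀ u v, G.ends x = s(u, v) → ¬ G.Connects T u v) ↔ ¬ G.Connects T a b := by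
  refine ⟨fun h => h a b hab, fun h u v huv hc => h ?_⟩
  rw [hab, Sym2.eq_iff] at huv
  rcases huv with ⟨rfl, rfl⟩ | ⟨rfl, rfl⟩
  exacts [hc, hc.symm]

/-- Spanning trees after subdividing an edge: at most one of the two halves is omitted, and
omitting a half corresponds to omitting the original edge. -/
theorem isSpanningTree_iff (T' : Set U'.C) :
    U'.G.IsSpanningTree T' ↔
      (e.c1 ∈ T' ∨ e.c2 ∈ T') ∧ U.G.IsSpanningTree (e.push T') := by
  have hold : ∀ x, e.πC x ≠ c →
      ((∀ u v, U'.G.ends x = s(u, v) → ¬ U'.G.Connects (T' \ {x}) u v) ↔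
        ∀ u v, U.G.ends (e.πC x) = s(u, v) →
          ¬ U.G.Connects (e.push T' \ {e.πC x}) u v) := by
    intro x hx
    obtain ⟨⟨a, b⟩, hab⟩ := Quot.exists_rep (U.G.ends (e.πC x))
    have hab : U.G.ends (e.πC x) = s(a, b) := hab.symm
    have hab' : U'.G.ends x = s(e.ιB a, e.ιB b) := by
      rw [e.ends_old x hx, hab, Sym2.map_mk]
    rw [bridge_iff_ends hab, bridge_iff_ends hab', e.connects_iff, e.push_diff_old T' hx]
  constructor
  · intro h
    have h12 : e.c1 ∈ T' ∨ e.c2 ∈ T' := by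
      by_contra! hn
      exact e.newB_isolated hn.1 hn.2 e.rS (h.1 _ _)
    refine ⟨h12, fun u v => e.connects_iff.1 (h.1 _ _), fun y hy => ?_⟩
    by_cases hyc : y = c
    · subst hyc
      have hy := e.mem_push_c.1 hy
      rw [bridge_iff_ends e.ends_c, ← e.c1_bridge_iff hy.2]
      exact h.2 _ hy.1 _ _ e.ends_c1
    · obtain ⟨x, rfl⟩ := e.π_surj y
      exact (hold x hyc).1 (h.2 x ((e.mem_push_old hyc).1 hy))
  · rintro ⟨h12, h⟩
    refine ⟨?_, fun x hx => ?_⟩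
    · obtain ⟨b, hb⟩ := e.newB_connects h12
      have hall : ∀ u, U'.G.Connects T' u (e.ιB b) := by
        intro u
        rcases e.B_cover u with rfl | ⟨u, rfl⟩
        · exact hb
        · exact e.connects_iff.2 (h.1 _ _)
      exact fun u v => (hall u).trans (hall v).symm
    · -- The same argument serves for `c1` and, after flipping the extension, for `c2`.
      have hnew : ∀ e : TypeAExt U U' c, U.G.IsSpanningTree (e.push T') → e.c1 ∈ T' →
          ∀ u v, U'.G.ends e.c1 = s(u, v) → ¬ U'.G.Connects (T' \ {e.c1}) u v := by
        intro e h h1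
        rw [bridge_iff_ends e.ends_c1]
        by_cases h2 : e.c2 ∈ T'
        · rw [e.c1_bridge_iff h2]
          exact h.2 c (e.mem_push_c.2 ⟨h1, h2⟩) _ _ e.ends_c
        · exact fun hc => e.newB_isolated (by simp) (fun h => h2 h.1) _ hc.symm
      rcases e.cases_crossing x with rfl | rfl | hxo
      · exact hnew e h hx
      · exact hnew e.flip h hx
      · exact (hold x hxo).2 (h.2 _ ((e.mem_push_old hxo).2 hx))

/-! ### Perfect matchings of a type A extension -/

/-- The old regions inside the extended configuration. -/
def κ : U.B ⊕ U.W → U'.B ⊕ U'.W := Sum.map e.ιB e.ιW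

theorem κ_inj : Function.Injective e.κ := Sum.map_injective.2 ⟨e.ιB_inj, e.ιW_bij.1⟩

theorem κ_ne (R : U.B ⊕ U.W) : e.κ R ≠ Sum.inl e.newB := by
  rcases R with b | w
  · exact fun h => e.newB_not b (Sum.inl.inj h)
  · exact Sum.inr_ne_inl

theorem κ_cover (R' : U'.B ⊕ U'.W) : R' = Sum.inl e.newB ∨ ∃ R, e.κ R = R' := by
  rcases R' with b | w
  · rcases e.B_cover b with rfl | ⟨b, rfl⟩
    · exact Or.inl rfl
    · exact Or.inr ⟨Sum.inl b, rfl⟩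
  · obtain ⟨w, rfl⟩ := e.ιW_bij.2 w
    exact Or.inr ⟨Sum.inr w, rfl⟩

theorem nonRoot_κ (R : U.B ⊕ U.W) : U'.NonRoot (e.κ R) ↔ U.NonRoot R := by
  rcases R with b | w
  · change e.ιB b ≠ U'.segBlack U'.s ↔ b ≠ U.segBlack U.s
    rw [e.s_pres, e.seg_black_old, e.ιB_inj.ne_iff]
  · change e.ιW w ≠ U'.segWhite U'.s ↔ w ≠ U.segWhite U.s
    rw [e.s_pres, e.seg_white_old, e.ιW_bij.1.ne_iff]

theorem nonRoot_newB : U'.NonRoot (Sum.inl e.newB) := by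
  change e.newB ≠ U'.segBlack U'.s
  rw [e.s_pres, e.seg_black_old]
  exact (e.newB_not _).symm

theorem mem_map_iff {V V' : Type} {f : V → V'} (hf : Function.Injective f) (z : Sym2 V) (v : V) :
    f v ∈ z.map f ↔ v ∈ z := by
  rw [Sym2.mem_map]
  exact ⟨fun ⟨a, ha, h⟩ => hf h ▸ ha, fun h => ⟨v, h, rfl⟩⟩

theorem incid_old {x : U'.C} (hx : e.πC x ≠ c) (R : U.B ⊕ U.W) :
    U'.Incid x (e.κ R) ↔ U.Incid (e.πC x) R := by
  rcases R with b | w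
  · change e.ιB b ∈ U'.G.ends x ↔ b ∈ U.G.ends _
    rw [e.ends_old x hx, mem_map_iff e.ιB_inj]
  · change e.ιW w ∈ U'.Gd.ends x ↔ w ∈ U.Gd.ends _
    rw [e.endsd_old x hx, mem_map_iff e.ιW_bij.1]

theorem incid_c1_inl (b : U.B) : U'.Incid e.c1 (e.κ (Sum.inl b)) ↔ b = e.rS := by
  change e.ιB b ∈ U'.G.ends _ ↔ _
  rw [e.ends_c1, Sym2.mem_iff, e.ιB_inj.eq_iff]
  simp [e.newB_not]

theorem incid_c2_inl (b : U.B) : U'.Incid e.c2 (e.κ (Sum.inl b)) ↔ b = e.rN :=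
  e.flip.incid_c1_inl b

theorem incid_c_inl (b : U.B) : U.Incid c (Sum.inl b) ↔ b = e.rN ∨ b = e.rS := by
  change b ∈ U.G.ends c ↔ _
  rw [e.ends_c, Sym2.mem_iff]

theorem incid_c1_inr (w : U.W) : U'.Incid e.c1 (e.κ (Sum.inr w)) ↔ U.Incid c (Sum.inr w) := by
  change e.ιW w ∈ U'.Gd.ends _ ↔ w ∈ U.Gd.ends _
  rw [e.endsd_c1, e.endsd_c, Sym2.mem_iff, Sym2.mem_iff, e.ιW_bij.1.eq_iff, e.ιW_bij.1.eq_iff]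

theorem incid_c2_inr (w : U.W) : U'.Incid e.c2 (e.κ (Sum.inr w)) ↔ U.Incid c (Sum.inr w) :=
  e.flip.incid_c1_inr w

theorem incid_newB (x : U'.C) : U'.Incid x (Sum.inl e.newB) ↔ x = e.c1 ∨ x = e.c2 := by
  change e.newB ∈ U'.G.ends x ↔ _
  rcases e.cases_crossing x with rfl | rfl | hx
  · simp [e.ends_c1]
  · simp [e.ends_c2]
  · simp [e.ends_old x hx, e.newB_not, e.ne_c1_of_old hx, e.ne_c2_of_old hx]

theorem incid_of_incid_κ {x : U'.C} {R : U.B ⊕ U.W} (h : U'.Incid x (e.κ R)) :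
    U.Incid (e.πC x) R := by
  rcases e.cases_crossing x with rfl | rfl | hx
  · rw [e.πc1]
    rcases R with b | w
    · rw [e.incid_c_inl]; exact Or.inr ((e.incid_c1_inl b).1 h)
    · exact (e.incid_c1_inr w).1 h
  · rw [e.πc2]
    rcases R with b | w
    · rw [e.incid_c_inl]; exact Or.inl ((e.incid_c2_inl b).1 h)
    · exact (e.incid_c2_inr w).1 h
  · exact (e.incid_old hx R).1 h

theorem exists_ne_c1 (y : U.C) : ∃ x, x ≠ e.c1 ∧ e.πC x = y := by
  by_cases hy : y = c
  · exact ⟨e.c2, e.c1_ne_c2.symm, e.πc2.trans hy.symm⟩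
  · obtain ⟨x, rfl⟩ := e.π_surj y
    exact ⟨x, e.ne_c1_of_old hy, rfl⟩

theorem inj_ne_c1 {x y : U'.C} (hx : x ≠ e.c1) (hy : y ≠ e.c1) (h : e.πC x = e.πC y) :
    x = y := by
  by_cases hc : e.πC x = c
  · rw [(e.fiber_c x hc).resolve_left hx, (e.fiber_c y (h ▸ hc)).resolve_left hy]
  · exact e.π_inj x y h hc

/-- `m'` matches `c1` with the new bigon and otherwise is `m`, with `c2` in the place of `c`. -/
def Lifts (m : U.C → U.B ⊕ U.W) (m' : U'.C → U'.B ⊕ U'.W) : Prop :=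
  m' e.c1 = Sum.inl e.newB ∧ ∀ x, x ≠ e.c1 → m' x = e.κ (m (e.πC x))

theorem exists_lift {m : U.C → U.B ⊕ U.W} (hm : U.IsPM m)
    (hi : U'.Incid e.c2 (e.κ (m c))) : ∃ m', U'.IsPM m' ∧ e.Lifts m m' := by
  obtain ⟨m', h1, hne⟩ : ∃ m' : U'.C → U'.B ⊕ U'.W, e.Lifts m m' :=
    ⟨fun x => if x = e.c1 then Sum.inl e.newB else e.κ (m (e.πC x)), if_pos rfl,
      fun x hx => if_neg hx⟩
  refine ⟨m', ⟨fun x => ?_, fun x => ?_, fun R hR => ?_⟩, h1, hne⟩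
  · rcases e.cases_crossing x with rfl | rfl | hx
    · rw [h1, incid_newB]; exact Or.inl rfl
    · rw [hne _ e.c1_ne_c2.symm, e.πc2]; exact hi
    · rw [hne _ (e.ne_c1_of_old hx), e.incid_old hx]; exact hm.1 _
  · by_cases hx : x = e.c1
    · rw [hx, h1]; exact e.nonRoot_newB
    · rw [hne x hx, nonRoot_κ]; exact hm.2.1 _
  · rcases e.κ_cover R with rfl | ⟨R, rfl⟩
    · refine ⟨e.c1, h1, fun y hy => ?_⟩
      by_contra hyc
      exact e.κ_ne _ ((hne y hyc).symm.trans hy)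
    · obtain ⟨y, hy, hu⟩ := hm.2.2 R ((e.nonRoot_κ R).1 hR)
      obtain ⟨x, hx, rfl⟩ := e.exists_ne_c1 y
      refine ⟨x, by simp only [hne x hx, hy], fun z hz => ?_⟩
      have hzc : z ≠ e.c1 := by
        rintro rfl
        rw [h1] at hz
        exact e.κ_ne R hz.symm
      exact e.inj_ne_c1 hzc hx (hu _ (e.κ_inj ((hne z hzc).symm.trans hz)))

theorem exists_contract {m' : U'.C → U'.B ⊕ U'.W} (hm : U'.IsPM m')
    (h1 : m' e.c1 = Sum.inl e.newB) : ∃ m, U.IsPM m ∧ e.Lifts m m' := by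
  have hex : ∀ y, ∃ R, ∀ x, x ≠ e.c1 → e.πC x = y → m' x = e.κ R := by
    intro y
    obtain ⟨x, hx, rfl⟩ := e.exists_ne_c1 y
    rcases e.κ_cover (m' x) with h | ⟨R, hR⟩
    · exact absurd ((hm.2.2 _ e.nonRoot_newB).unique h h1) hx
    · exact ⟨R, fun z hz hzx => by rw [e.inj_ne_c1 hz hx hzx, hR]⟩
  choose m hm0 using hex
  have hne : ∀ x, x ≠ e.c1 → m' x = e.κ (m (e.πC x)) := fun x hx => hm0 _ x hx rfl
  refine ⟨m, ⟨fun y => ?_, fun y => ?_, fun R hR => ?_⟩, h1, hne⟩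
  · obtain ⟨x, hx, rfl⟩ := e.exists_ne_c1 y
    exact e.incid_of_incid_κ (hne x hx ▸ hm.1 x)
  · obtain ⟨x, hx, rfl⟩ := e.exists_ne_c1 y
    exact (e.nonRoot_κ _).1 (hne x hx ▸ hm.2.1 x)
  · obtain ⟨x, hx, hu⟩ := hm.2.2 _ ((e.nonRoot_κ R).2 hR)
    have hxc : x ≠ e.c1 := by
      rintro rfl
      rw [h1] at hx
      exact e.κ_ne R hx.symm
    rw [hne x hxc] at hx
    refine ⟨e.πC x, e.κ_inj hx, fun y hy => ?_⟩
    obtain ⟨z, hz, rfl⟩ := e.exists_ne_c1 y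
    rw [hu z (by simp only [hne z hz, hy])]

theorem c1_or_c2 {m' : U'.C → U'.B ⊕ U'.W} (hm : U'.IsPM m') :
    m' e.c1 = Sum.inl e.newB ∨ m' e.c2 = Sum.inl e.newB := by
  obtain ⟨x, hx, _⟩ := hm.2.2 _ e.nonRoot_newB
  have := hm.1 x
  rw [hx, e.incid_newB] at this
  rcases this with rfl | rfl
  exacts [Or.inl hx, Or.inr hx]

variable {e}

theorem Lifts.c1_mem {m : U.C → U.B ⊕ U.W} {m' : U'.C → U'.B ⊕ U'.W} (h : e.Lifts m m') :
    e.c1 ∈ U'.treeOf m' := ⟨_, h.1⟩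

theorem Lifts.mem_iff {m : U.C → U.B ⊕ U.W} {m' : U'.C → U'.B ⊕ U'.W} (h : e.Lifts m m')
    {x : U'.C} (hx : x ≠ e.c1) : x ∈ U'.treeOf m' ↔ e.πC x ∈ U.treeOf m := by
  change (∃ b, m' x = _) ↔ ∃ b, m _ = _
  rw [h.2 x hx]
  rcases m (e.πC x) with b | w <;> simp [κ]

theorem Lifts.push_eq {m : U.C → U.B ⊕ U.W} {m' : U'.C → U'.B ⊕ U'.W} (h : e.Lifts m m') :
    e.push (U'.treeOf m') = U.treeOf m := by
  refine e.eq_push ?_ fun x hx => h.mem_iff (e.ne_c1_of_old hx)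
  rw [h.mem_iff e.c1_ne_c2.symm, e.πc2]
  exact and_iff_right h.c1_mem

/-! ### Activities in a type A extension -/

variable (e)

/-- Extending by a bigon does not change the activity of an old crossing. -/
theorem active_old {T' : Set U'.C} (h12 : e.c1 ∈ T' ∨ e.c2 ∈ T') {x : U'.C}
    (hx : e.πC x ≠ c) : U'.Active T' x ↔ U.Active (e.push T') (e.πC x) := by
  have hx1 := e.ne_c1_of_old hx
  have hx2 := e.ne_c2_of_old hx
  have hle : ∀ f, U'.ord x ≤ U'.ord f ↔ U.ord (e.πC x) ≤ U.ord (e.πC f) := by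
    intro f
    by_cases hf : f = x
    · simp [hf]
    · exact e.ord_le_iff fun h => hf ((e.π_eq_iff hx).1 h.symm)
  -- Exchanges bringing in `f`.
  have hin : ∀ f, f ∉ T' → (U'.G.IsSpanningTree (T' \ {x} ∪ {f}) ↔
      U.G.IsSpanningTree (e.push T' \ {e.πC x} ∪ {e.πC f})) := by
    intro f hf
    rw [e.isSpanningTree_iff]
    have : e.push (T' \ {x} ∪ {f}) = e.push T' \ {e.πC x} ∪ {e.πC f} := by
      refine e.eq_push ?_ fun y hy => ?_
      · rcases e.cases_crossing f with rfl | rfl | hfo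
        · have := h12.resolve_left hf
          simp [e.πc1, this, hx2.symm]
        · have := h12.resolve_right hf
          simp [e.πc2, this, hx1.symm]
        · simp [mem_push_c, hx1.symm, hx2.symm, hx.symm, hfo.symm, (e.ne_c1_of_old hfo).symm,
            (e.ne_c2_of_old hfo).symm]
      · simp only [Set.mem_union, Set.mem_sdiff, Set.mem_singleton_iff, e.mem_push_old hy,
          e.π_eq_iff hx, eq_comm (a := e.πC y) (b := e.πC f), e.π_eq_iff hy,
          eq_comm (a := y) (b := f)]
    rw [this]
    refine and_iff_right (h12.imp ?_ ?_)
    · exact fun h => Or.inl ⟨h, hx1.symm⟩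
    · exact fun h => Or.inl ⟨h, hx2.symm⟩
  -- Exchanges taking out `f`.
  have hout : ∀ f, e.πC f ∈ e.push T' → (U'.G.IsSpanningTree ((T' ∪ {x}) \ {f}) ↔
      U.G.IsSpanningTree ((e.push T' ∪ {e.πC x}) \ {e.πC f})) := by
    intro f hf
    rw [e.isSpanningTree_iff]
    have : e.push ((T' ∪ {x}) \ {f}) = (e.push T' ∪ {e.πC x}) \ {e.πC f} := by
      refine e.eq_push ?_ fun y hy => ?_
      · rcases e.cases_crossing f with rfl | rfl | hfo
        · simp [e.πc1]
        · simp [e.πc2]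
        · simp [mem_push_c, hx1.symm, hx2.symm, hx.symm, hfo.symm, (e.ne_c1_of_old hfo).symm,
            (e.ne_c2_of_old hfo).symm]
      · simp only [Set.mem_union, Set.mem_sdiff, Set.mem_singleton_iff, e.mem_push_old hy,
          e.π_eq_iff hx, eq_comm (a := e.πC y) (b := e.πC f), e.π_eq_iff hy,
          eq_comm (a := y) (b := f)]
    rw [this]
    refine and_iff_right ?_
    rcases e.cases_crossing f with rfl | rfl | hfo
    · rw [e.πc1, mem_push_c] at hf
      exact Or.inr ⟨Or.inl hf.2, fun h => e.c1_ne_c2 h.symm⟩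
    · rw [e.πc2, mem_push_c] at hf
      exact Or.inl ⟨Or.inl hf.1, e.c1_ne_c2⟩
    · exact h12.imp (fun h => ⟨Or.inl h, (e.ne_c1_of_old hfo).symm⟩)
        (fun h => ⟨Or.inl h, (e.ne_c2_of_old hfo).symm⟩)
  unfold LinkConfig.Active
  rw [e.mem_push_old hx]
  refine and_congr (imp_congr_right fun hxT => ?_) (imp_congr_right fun hxT => ?_)
  · constructor
    · intro h f hf hst
      obtain ⟨f, rfl, hfT⟩ : ∃ f', e.πC f' = f ∧ f' ∉ T' := by
        by_contra! hn
        exact hf hn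
      exact (hle f).1 (h f hfT ((hin f hfT).2 hst))
    · intro h f hf hst
      exact (hle f).2 (h _ (fun h' => hf (h' f rfl)) ((hin f hf).1 hst))
  · constructor
    · intro h f hf hst
      obtain ⟨f, rfl⟩ := e.π_surj f
      exact (hle f).1 (h f (hf f rfl) ((hout f hf).2 hst))
    · intro h f hf hst
      by_cases hfp : e.πC f ∈ e.push T'
      · exact (hle f).2 (h _ hfp ((hout f hfp).1 hst))
      · -- Here `f` is the only one of `c1`, `c2` in `T'`, so removing it isolates the bigon.
        exfalso
        have h3 := ((e.isSpanningTree_iff _).1 hst).1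
        rcases e.cases_crossing f with rfl | rfl | hfo
        · rw [e.πc1, mem_push_c] at hfp
          simp only [Set.mem_sdiff, Set.mem_union, Set.mem_singleton_iff, hx2.symm] at h3
          tauto
        · rw [e.πc2, mem_push_c] at hfp
          simp only [Set.mem_sdiff, Set.mem_union, Set.mem_singleton_iff, hx1.symm] at h3
          tauto
        · exact hfp ((e.mem_push_old hfo).2 hf)

/-- If `c1` alone lies in the tree, its cocycle is the boundary `{c1, c2}` of the bigon. -/
theorem active_newB {T' : Set U'.C} (hT : U'.G.IsSpanningTree T') (h1 : e.c1 ∈ T')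
    (h2 : e.c2 ∉ T') : U'.Active T' e.c1 ↔ U'.ord e.c1 ≤ U'.ord e.c2 := by
  refine ⟨fun h => h.1 h1 e.c2 h2 ?_, fun h => ⟨fun _ f hf hst => ?_, fun hn => absurd h1 hn⟩⟩
  · rw [e.isSpanningTree_iff] at hT ⊢
    refine ⟨Or.inr (Or.inr rfl), ?_⟩
    convert hT.2 using 1
    refine e.eq_push ?_ fun y hy => ?_
    · simp [mem_push_c, h2, e.c1_ne_c2]
    · simp [e.mem_push_old hy, e.ne_c1_of_old hy, e.ne_c2_of_old hy]
  · have h3 := ((e.isSpanningTree_iff _).1 hst).1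
    have : f = e.c2 := by
      rcases h3 with (h3 | h3) | (h3 | h3)
      · exact absurd rfl h3.2
      · exact absurd (h3 ▸ h1) hf
      · exact absurd h3.1 h2
      · exact h3.symm
    rw [this]; exact h

/-- If both new crossings lie in the tree, `c2` inherits the cocycle of `c`. -/
theorem active_both {T' : Set U'.C} (h1 : e.c1 ∈ T') (h2 : e.c2 ∈ T') :
    U'.Active T' e.c2 ↔ U.Active (e.push T') c := by
  have hc : c ∈ e.push T' := e.mem_push_c.2 ⟨h1, h2⟩
  have hin : ∀ f, e.πC f ≠ c → (U'.G.IsSpanningTree (T' \ {e.c2} ∪ {f}) ↔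
      U.G.IsSpanningTree (e.push T' \ {c} ∪ {e.πC f})) := by
    intro f hfo
    rw [e.isSpanningTree_iff]
    have : e.push (T' \ {e.c2} ∪ {f}) = e.push T' \ {c} ∪ {e.πC f} := by
      refine e.eq_push ?_ fun y hy => ?_
      · simp [hfo.symm, (e.ne_c2_of_old hfo).symm]
      · simp [e.mem_push_old hy, hy, e.ne_c2_of_old hy, eq_comm (a := e.πC y), e.π_eq_iff hy,
          eq_comm (a := y)]
    rw [this]
    exact and_iff_right (Or.inl (Or.inl ⟨h1, e.c1_ne_c2⟩))
  have hle : ∀ f, e.πC f ≠ c → (U'.ord e.c2 ≤ U'.ord f ↔ U.ord c ≤ U.ord (e.πC f)) := by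
    intro f hf
    rw [e.ord_le_iff (by rw [e.πc2]; exact hf.symm), e.πc2]
  constructor
  · refine fun h => ⟨fun _ f hf hst => ?_, fun hn => absurd hc hn⟩
    have hfc : f ≠ c := by rintro rfl; exact hf hc
    obtain ⟨f, rfl⟩ := e.π_surj f
    exact (hle f hfc).1 (h.1 h2 f (fun h' => hf ((e.mem_push_old hfc).2 h')) ((hin f hfc).2 hst))
  · refine fun h => ⟨fun _ f hf hst => ?_, fun hn => absurd h2 hn⟩
    have hfc : e.πC f ≠ c := by
      intro h'
      rcases e.fiber_c f h' with rfl | rfl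
      exacts [hf h1, hf h2]
    exact (hle f hfc).2 (h.1 hc _ (fun h' => hf (h' f rfl)) ((hin f hfc).1 hst))

/-- If `c1` alone lies in the tree, the dual cocycle of `c2` is that of `c`, with `c` replaced by
the parallel edges `c1`, `c2`. -/
theorem active_one {T' : Set U'.C} (hT : U'.G.IsSpanningTree T') (h1 : e.c1 ∈ T')
    (h2 : e.c2 ∉ T') : U'.Active T' e.c2 ↔
      U'.ord e.c2 ≤ U'.ord e.c1 ∧ U.Active (e.push T') c := by
  have hc : c ∉ e.push T' := fun h => h2 (e.mem_push_c.1 h).2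
  have hout : ∀ f, e.πC f ≠ c → (U'.G.IsSpanningTree ((T' ∪ {e.c2}) \ {f}) ↔
      U.G.IsSpanningTree ((e.push T' ∪ {c}) \ {e.πC f})) := by
    intro f hfo
    rw [e.isSpanningTree_iff]
    have : e.push ((T' ∪ {e.c2}) \ {f}) = (e.push T' ∪ {c}) \ {e.πC f} := by
      refine e.eq_push ?_ fun y hy => ?_
      · simp [hfo.symm, (e.ne_c2_of_old hfo).symm, (e.ne_c1_of_old hfo).symm, h1]
      · simp [e.mem_push_old hy, hy, e.ne_c2_of_old hy, eq_comm (a := e.πC y), e.π_eq_iff hy,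
          eq_comm (a := y)]
    rw [this]
    exact and_iff_right (Or.inl ⟨Or.inl h1, (e.ne_c1_of_old hfo).symm⟩)
  have hle : ∀ f, e.πC f ≠ c → (U'.ord e.c2 ≤ U'.ord f ↔ U.ord c ≤ U.ord (e.πC f)) := by
    intro f hf
    rw [e.ord_le_iff (by rw [e.πc2]; exact hf.symm), e.πc2]
  constructor
  · refine fun h => ⟨h.2 h2 e.c1 h1 ?_, fun hn => absurd hn hc, fun _ f hf hst => ?_⟩
    · rw [e.isSpanningTree_iff] at hT ⊢
      refine ⟨Or.inr ⟨Or.inr rfl, fun h => e.c1_ne_c2 h.symm⟩, ?_⟩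
      convert hT.2 using 1
      refine e.eq_push ?_ fun y hy => ?_
      · simp [mem_push_c, h2]
      · simp [e.mem_push_old hy, e.ne_c1_of_old hy, e.ne_c2_of_old hy]
    · have hfc : f ≠ c := by rintro rfl; exact hc hf
      obtain ⟨f, rfl⟩ := e.π_surj f
      exact (hle f hfc).1 (h.2 h2 f (hf f rfl) ((hout f hfc).2 hst))
  · refine fun ⟨h12, h⟩ => ⟨fun hn => absurd hn h2, fun _ f hf hst => ?_⟩
    rcases e.cases_crossing f with rfl | rfl | hfc
    · exact h12
    · exact absurd hf h2
    · exact (hle f hfc).2 (h.2 hc _ ((e.mem_push_old hfc).2 hf) ((hout f hfc).1 hst))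

/-! ### The inductive step -/

theorem tree_of_lifts (hU : U.Inv) {m : U.C → U.B ⊕ U.W} {m' : U'.C → U'.B ⊕ U'.W}
    (hm : U.IsPM m) (h : e.Lifts m m') : U'.G.IsSpanningTree (U'.treeOf m') := by
  rw [e.isSpanningTree_iff, h.push_eq]
  exact ⟨Or.inl h.c1_mem, hU.tree m hm⟩

theorem active_iff_of_rule (hU : U.Inv) {m : U.C → U.B ⊕ U.W} (hm : U.IsPM m) (y : U.C) :
    U.Active (U.treeOf m) y ↔ ∀ y', U.Incid y' (m y) → U.ord y ≤ U.ord y' := by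
  have h := hU.rule m hm y
  unfold LinkConfig.matchLetter LinkConfig.ruleLetter at h
  rw [U.dblLetter_eq (hU.tree m hm)] at h
  split_ifs at h with h1 h2 h2 <;> simp_all

/-- There is a matching with `c1` on the bigon and `c2` on a white region. -/
theorem exists_lift_white (hU : U.Inv) : ∃ m m', U.IsPM m ∧ U'.IsPM m' ∧ e.Lifts m m' ∧
    ∃ w, m c = Sum.inr w := by
  obtain ⟨m, hm, w, hw⟩ := hU.white c
  obtain ⟨m', hm', hl⟩ := e.exists_lift hm (by
    rw [hw, e.incid_c2_inr, ← hw]; exact hm.1 c)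
  exact ⟨m, m', hm, hm', hl, w, hw⟩

theorem rN_ne_rS (hU : U.Inv) : e.rN ≠ e.rS := by
  have := hU.noLoop c
  rwa [e.ends_c, Sym2.mk_isDiag_iff] at this

/-- The lowest-label rule for a matching with `c1` on the bigon. -/
theorem rule_of_lifts (hU : U.Inv) (hEI : U'.EIconfig) {m : U.C → U.B ⊕ U.W}
    {m' : U'.C → U'.B ⊕ U'.W} (hm : U.IsPM m) (hm' : U'.IsPM m') (h : e.Lifts m m')
    (x : U'.C) : U'.matchLetter m' x = U'.ruleLetter x (m' x) := by
  have hT := e.tree_of_lifts hU hm h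
  -- It suffices to compare the conditions for the letter `L`.
  have red : ∀ {m : U.C → U.B ⊕ U.W} {m' : U'.C → U'.B ⊕ U'.W}, U.IsPM m → e.Lifts m m' →
      (U'.Active (U'.treeOf m') x ↔ ∀ y, U'.Incid y (m' x) → U'.ord x ≤ U'.ord y) →
      U'.matchLetter m' x = U'.ruleLetter x (m' x) := by
    intro m m' hm h hiff
    unfold LinkConfig.matchLetter LinkConfig.ruleLetter
    rw [U'.dblLetter_eq (e.tree_of_lifts hU hm h)]
    congr 1
    exact propext hiff
  rcases e.cases_crossing x with rfl | rfl | hx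
  · -- By the EI-property the matching may be replaced by one with `c2` on a white region.
    obtain ⟨m₀, m₁, hm₀, hm₁, h₁, w, hw⟩ := e.exists_lift_white hU
    rw [hEI e.c1 _ (hm'.1 _) (hm'.2.1 _) m' m₁ hm' hm₁ rfl (h₁.1.trans h.1.symm), h.1, ← h₁.1]
    refine red hm₀ h₁ ?_
    rw [e.active_newB (e.tree_of_lifts hU hm₀ h₁) h₁.c1_mem, h₁.1]
    · simp only [e.incid_newB]
      constructor
      · rintro h y (rfl | rfl)
        exacts [le_rfl, h]
      · exact fun h => h _ (Or.inr rfl)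
    · rw [h₁.mem_iff e.c1_ne_c2.symm, e.πc2]
      rintro ⟨b, hb⟩
      rw [hw] at hb
      cases hb
  · refine red hm h ?_
    have hle : ∀ f, e.πC f ≠ c → (U'.ord e.c2 ≤ U'.ord f ↔ U.ord c ≤ U.ord (e.πC f)) := by
      intro f hf
      rw [e.ord_le_iff (by rw [e.πc2]; exact hf.symm), e.πc2]
    have hinc := hm'.1 e.c2
    have hact := active_iff_of_rule hU hm c
    have hmem := h.mem_iff e.c1_ne_c2.symm
    have hval := h.2 e.c2 e.c1_ne_c2.symm
    rw [e.πc2] at hval hmem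
    rw [hval] at hinc ⊢
    -- The crossings around the region other than `c1`, `c2`.
    have hold : (∀ y', U.Incid y' (m c) → U.ord c ≤ U.ord y') ↔
        ∀ y, e.πC y ≠ c → U'.Incid y (e.κ (m c)) → U'.ord e.c2 ≤ U'.ord y := by
      constructor
      · intro h y hy hi
        exact (hle y hy).2 (h _ ((e.incid_old hy _).1 hi))
      · intro h y hi
        by_cases hy : y = c
        · rw [hy]
        · obtain ⟨y, rfl⟩ := e.π_surj y
          exact (hle y hy).1 (h y hy ((e.incid_old hy _).2 hi))
    rcases hR : m c with b | w
    · rw [e.active_both h.c1_mem (hmem.2 ⟨b, hR⟩), h.push_eq, hact, hold, hR]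
      rw [hR, e.incid_c2_inl] at hinc
      refine ⟨fun h y hi => ?_, fun h y _ hi => h y hi⟩
      rcases e.cases_crossing y with rfl | rfl | hy
      · rw [e.incid_c1_inl] at hi
        exact absurd (hinc.symm.trans hi) (e.rN_ne_rS hU)
      · exact le_rfl
      · exact h y hy hi
    · have hn : e.c2 ∉ U'.treeOf m' := by
        rw [hmem]
        rintro ⟨b, hb⟩
        rw [hR] at hb
        cases hb
      rw [e.active_one hT h.c1_mem hn, h.push_eq, hact, hold, hR]
      rw [hR, e.incid_c2_inr] at hinc
      refine ⟨fun ⟨h12, h⟩ y hi => ?_, fun h => ⟨h _ ?_, fun y _ hi => h y hi⟩⟩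
      · rcases e.cases_crossing y with rfl | rfl | hy
        · exact h12
        · exact le_rfl
        · exact h y hy hi
      · exact (e.incid_c1_inr w).2 hinc
  · refine red hm h ?_
    rw [e.active_old (Or.inl h.c1_mem) hx, h.push_eq, active_iff_of_rule hU hm,
      h.2 x (e.ne_c1_of_old hx)]
    have hle : ∀ f, U'.ord x ≤ U'.ord f ↔ U.ord (e.πC x) ≤ U.ord (e.πC f) := by
      intro f
      by_cases hf : f = x
      · simp [hf]
      · exact e.ord_le_iff fun h => hf ((e.π_eq_iff hx).1 h.symm)
    constructor
    · exact fun h y hi => (hle y).2 (h _ (e.incid_of_incid_κ hi))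
    · intro h y hi
      obtain ⟨y', rfl, hinc⟩ : ∃ y', e.πC y' = y ∧ U'.Incid y' (e.κ (m (e.πC x))) := by
        by_cases hy : y = c
        · subst hy
          rcases hR : m (e.πC x) with b | w
          · rw [hR, e.incid_c_inl] at hi
            rcases hi with hb | hb
            · exact ⟨e.c2, e.πc2, (e.incid_c2_inl b).2 hb⟩
            · exact ⟨e.c1, e.πc1, (e.incid_c1_inl b).2 hb⟩
          · rw [hR] at hi
            exact ⟨e.c1, e.πc1, (e.incid_c1_inr w).2 hi⟩
        · obtain ⟨y, rfl⟩ := e.π_surj y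
          exact ⟨y, rfl, (e.incid_old hy _).2 hi⟩
      exact (hle y').1 (h y' hinc)

/-- Every perfect matching extends to the bigon extension, keeping its values on old crossings. -/
theorem exists_extension {m : U.C → U.B ⊕ U.W} (hm : U.IsPM m) :
    ∃ m', U'.IsPM m' ∧ ∀ x, e.πC x ≠ c → m' x = e.κ (m (e.πC x)) := by
  have hi := hm.1 c
  have : U'.Incid e.c2 (e.κ (m c)) ∨ U'.Incid e.flip.c2 (e.flip.κ (m c)) := by
    rcases hR : m c with b | w
    · rw [hR, e.incid_c_inl] at hi
      exact hi.imp (e.incid_c2_inl b).2 (e.incid_c1_inl b).2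
    · rw [hR] at hi
      exact Or.inl ((e.incid_c2_inr w).2 hi)
  rcases this with h | h
  · obtain ⟨m', hm', hl⟩ := e.exists_lift hm h
    exact ⟨m', hm', fun x hx => hl.2 x (e.ne_c1_of_old hx)⟩
  · obtain ⟨m', hm', hl⟩ := e.flip.exists_lift hm h
    exact ⟨m', hm', fun x hx => hl.2 x (e.ne_c2_of_old hx)⟩

theorem inv (e : TypeAExt U U' c) (hU : U.Inv) (hEI : U'.EIconfig) : U'.Inv := by
  have hcontr : ∀ m', U'.IsPM m' → ∃ (e : TypeAExt U U' c) (m : U.C → U.B ⊕ U.W),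
      U.IsPM m ∧ e.Lifts m m' := by
    intro m' hm'
    rcases e.c1_or_c2 hm' with h | h
    · obtain ⟨m, hm, hl⟩ := e.exists_contract hm' h
      exact ⟨e, m, hm, hl⟩
    · obtain ⟨m, hm, hl⟩ := e.flip.exists_contract hm' h
      exact ⟨e.flip, m, hm, hl⟩
  have hwhite : ∀ e : TypeAExt U U' c, ∃ m', U'.IsPM m' ∧ (∃ b, m' e.c1 = Sum.inl b) ∧
      ∃ w, m' e.c2 = Sum.inr w := by
    intro e
    obtain ⟨m, m', hm, hm', hl, w, hw⟩ := e.exists_lift_white hU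
    refine ⟨m', hm', ⟨_, hl.1⟩, e.ιW w, ?_⟩
    rw [hl.2 _ e.c1_ne_c2.symm, e.πc2, hw]
    rfl
  have hmap : ∀ {V V' : Type} {f : V → V'}, Function.Injective f → ∀ z : Sym2 V,
      ¬ z.IsDiag → ¬ (z.map f).IsDiag := by
    intro V V' f hf z hz
    rwa [Sym2.isDiag_map hf]
  obtain ⟨m1, hm1, hb1, hw1⟩ := hwhite e
  obtain ⟨m2, hm2, hb2, hw2⟩ := hwhite e.flip
  refine ⟨fun x => ?_, fun x => ?_, fun m' hm' => ?_, fun x => ?_, fun x => ?_,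
    fun m' hm' x => ?_⟩
  · rcases e.cases_crossing x with rfl | rfl | hx
    · rw [e.ends_c1, Sym2.mk_isDiag_iff]; exact e.newB_not _
    · rw [e.ends_c2, Sym2.mk_isDiag_iff]; exact e.newB_not _
    · rw [e.ends_old x hx]; exact hmap e.ιB_inj _ (hU.noLoop _)
  · have hc := hU.noLoopd c
    rw [e.endsd_c, Sym2.mk_isDiag_iff] at hc
    rcases e.cases_crossing x with rfl | rfl | hx
    · rw [e.endsd_c1, Sym2.mk_isDiag_iff, e.ιW_bij.1.eq_iff]; exact hc
    · rw [e.endsd_c2, Sym2.mk_isDiag_iff, e.ιW_bij.1.eq_iff]; exact hc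
    · rw [e.endsd_old x hx]; exact hmap e.ιW_bij.1 _ (hU.noLoopd _)
  · obtain ⟨e, m, hm, hl⟩ := hcontr m' hm'
    exact e.tree_of_lifts hU hm hl
  · rcases e.cases_crossing x with rfl | rfl | hx
    · exact ⟨m1, hm1, hb1⟩
    · exact ⟨m2, hm2, hb2⟩
    · obtain ⟨m, hm, b, hb⟩ := hU.black (e.πC x)
      obtain ⟨m', hm', hl⟩ := e.exists_extension hm
      exact ⟨m', hm', e.ιB b, by rw [hl x hx, hb]; rfl⟩
  · rcases e.cases_crossing x with rfl | rfl | hx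
    · exact ⟨m2, hm2, hw2⟩
    · exact ⟨m1, hm1, hw1⟩
    · obtain ⟨m, hm, w, hw⟩ := hU.white (e.πC x)
      obtain ⟨m', hm', hl⟩ := e.exists_extension hm
      exact ⟨m', hm', e.ιW w, by rw [hl x hx, hw]; rfl⟩
  · obtain ⟨e, m, hm, hl⟩ := hcontr m' hm'
    exact e.rule_of_lifts hU hEI hm hm' hl x

end TypeAExt

theorem IsAdmissible.inv {U : LinkConfig} (h : IsAdmissible U) : U.Inv := by
  induction h with
  | hopf U h => exact h.inv
  | stepA U U' c _ e hEI ih => exact e.inv ih hEI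
  | stepB U U' c _ e hEI ih => exact (e.toDual.inv ih.dual hEI.dual).dual

/-- activity letters in admissible link configurations.
Every admissible link configuration `U = L_{s;l}` (one obtained from a Hopf
link configuration by a sequence of admissible bigon extensions) satisfies the
EI-property, and the activity letter of every half-edge `h_{(c,R)}` of the
balanced overlaid checkerboard graph — i.e. the letter assigned to the
corresponding full-edge by any perfect matching containing the half-edge — is
`L` if `c` carries the lowest label among the crossings incident to `R`, and
`D` otherwise (the letter computed by `ruleLetter`). -/
theorem statement15 (U : LinkConfig) (hadm : IsAdmissible U) :
    U.EIconfig ∧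
      ∀ (c : U.C) (R : U.B ⊕ U.W), U.Incid c R → U.NonRoot R →
        ∀ m, U.IsPM m → m c = R → U.matchLetter m c = U.ruleLetter c R := by
  have h := hadm.inv
  refine ⟨fun c R _ _ m m' hm hm' hc hc' => ?_, ?_⟩
  · rw [h.rule m hm c, h.rule m' hm' c, hc, hc']
  · rintro c R - - m hm rfl
    exact h.rule m hm c
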